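/- Let M be a 4-divisible multiset of points in PG(v-1,2) of cardinality 10. Then either there exists a point P with M(P) ≥ 4, or M = 2·B where B is the characteristic function of a projective base of size 5. In particular, every point multiplicity of M lies in {0,2,4,6}. -/

import Mathlib

open scoped Classical

noncomputable def MVal {F V : Type*} [Field F] [AddCommGroup V] [Module F V]
    (M : Projectivization F V → ℕ) (K : Submodule F V) : ℕ :=
  ∑ᶠ P ∈ {P : Projectivization F V | P.submodule ≤ K}, M P

def IsDivisible {F V : Type*} [Field F] [AddCommGroup V] [Module F V] (Δ : ℕ)
    (M : Projectivization F V → ℕ) : Prop :=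
  ∀ H : Submodule F V, Module.finrank F H + 1 = Module.finrank F V →
    MVal M H ≡ MVal M ⊤ [MOD Δ]

def IsSpanning {F V : Type*} [Field F] [AddCommGroup V] [Module F V]
    (M : Projectivization F V → ℕ) : Prop :=
  (⨆ P ∈ {P : Projectivization F V | 0 < M P}, P.submodule) = ⊤

def gaussNum (q k : ℕ) : ℕ := ∑ i ∈ Finset.range k, q ^ i

def IsProjBase {F V : Type*} [Field F] [AddCommGroup V] [Module F V]
    (n : ℕ) (B : Finset (Projectivization F V)) : Prop :=
  B.card = n ∧ ∀ T ⊆ B, T.card = n - 1 →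
    Module.finrank F ((⨆ P ∈ T, Projectivization.submodule P) : Submodule F V) = n - 1

/-- The sign character of `ZMod 2`. -/
def sgnChar (a : ZMod 2) : ℤ := 1 - 2 * (a.val : ℤ)

lemma sgnChar_add (a b : ZMod 2) : sgnChar (a + b) = sgnChar a * sgnChar b := by
  revert a b; decide

section core
variable {W : Type*} [AddCommGroup W] [Module (ZMod 2) W] [Fintype W]
  [Fintype (Module.Dual (ZMod 2) W)]

lemma sgn_sum (x : W) : ∑ ψ : Module.Dual (ZMod 2) W, sgnChar (ψ x) =
    if x = 0 then (2 : ℤ) ^ Module.finrank (ZMod 2) W else 0 := by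
  split_ifs with h
  · subst h
    have : Fintype.card (Module.Dual (ZMod 2) W) = 2 ^ Module.finrank (ZMod 2) W := by
      rw [Module.card_eq_pow_finrank (K := ZMod 2), Subspace.dual_finrank_eq, ZMod.card]
    simp [sgnChar, this]
  · have : ∃ φ : Module.Dual (ZMod 2) W, φ x ≠ 0 := by
      by_contra! hh
      exact h ((Module.forall_dual_apply_eq_zero_iff (ZMod 2) x).1 hh)
    obtain ⟨φ, hφ⟩ := this
    have h1 : φ x = 1 := by
      generalize φ x = a at hφ
      revert a; decide
    have := Equiv.sum_comp (Equiv.addRight φ) (fun ψ : Module.Dual (ZMod 2) W => sgnChar (ψ x))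
    simp only [Equiv.coe_addRight, LinearMap.add_apply, sgnChar_add, h1] at this
    rw [← Finset.sum_mul] at this
    have h2 : sgnChar 1 = -1 := by decide
    rw [h2] at this
    linarith

lemma char2_add_eq_zero {W : Type*} [AddCommGroup W] [Module (ZMod 2) W] (x y : W) : x + y = 0 ↔ y = x := by
  rw [add_eq_zero_iff_neg_eq, ZModModule.neg_eq_self]; exact eq_comm

lemma inv1 (f : W → ℕ) (x : W) :
    ∑ ψ : Module.Dual (ZMod 2) W, sgnChar (ψ x) * ∑ y, (f y : ℤ) * sgnChar (ψ y) =
      2 ^ Module.finrank (ZMod 2) W * f x := by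
  have : ∀ ψ : Module.Dual (ZMod 2) W, sgnChar (ψ x) * ∑ y, (f y : ℤ) * sgnChar (ψ y) =
      ∑ y, (f y : ℤ) * sgnChar (ψ (x + y)) := by
    intro ψ
    rw [Finset.mul_sum]
    refine Finset.sum_congr rfl fun y _ => ?_
    rw [map_add, sgnChar_add]; ring
  simp_rw [this]
  rw [Finset.sum_comm]
  simp_rw [← Finset.mul_sum, sgn_sum, char2_add_eq_zero]
  simp [mul_comm]

lemma inv2 (f : W → ℕ) (x : W) :
    ∑ ψ : Module.Dual (ZMod 2) W, sgnChar (ψ x) * (∑ y, (f y : ℤ) * sgnChar (ψ y)) ^ 2 =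
      2 ^ Module.finrank (ZMod 2) W * ∑ y, (f y : ℤ) * f (x + y) := by
  have : ∀ ψ : Module.Dual (ZMod 2) W, sgnChar (ψ x) * (∑ y, (f y : ℤ) * sgnChar (ψ y)) ^ 2 =
      ∑ z, (f z : ℤ) * (sgnChar (ψ (x + z)) * ∑ y, (f y : ℤ) * sgnChar (ψ y)) := by
    intro ψ
    rw [sq, mul_left_comm, Finset.sum_mul]
    refine Finset.sum_congr rfl fun y _ => ?_
    rw [map_add, sgnChar_add]; ring
  simp_rw [this]
  rw [Finset.sum_comm]
  simp_rw [← Finset.mul_sum, inv1]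
  rw [Finset.mul_sum]
  refine Finset.sum_congr rfl fun y _ => ?_
  ring

lemma core_main (f : W → ℕ) (hf0 : f 0 = 0) (hsum : ∑ x, f x = 10)
    (hspan : Submodule.span (ZMod 2) {x | f x ≠ 0} = ⊤)
    (hdiv : ∀ ψ : Module.Dual (ZMod 2) W, 4 ∣ ∑ x, f x * (ψ x).val) :
    ((∃ x, 4 ≤ f x) ∨
      (Module.finrank (ZMod 2) W = 4 ∧ ∀ x, f x = 0 ∨ f x = 2)) ∧
    (∀ x, f x = 0 ∨ f x = 2 ∨ f x = 4 ∨ f x = 6) := by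
  set k := Module.finrank (ZMod 2) W with hk
  have hs : ∀ ψ : Module.Dual (ZMod 2) W, ∑ y, (f y : ℤ) * sgnChar (ψ y) =
      10 - 2 * ((∑ x, f x * (ψ x).val : ℕ) : ℤ) := by
    intro ψ
    have : (10 : ℤ) = ∑ x, (f x : ℤ) := by exact_mod_cast hsum.symm
    rw [this]
    push_cast
    rw [Finset.mul_sum, ← Finset.sum_sub_distrib]
    refine Finset.sum_congr rfl fun y _ => ?_
    rw [sgnChar]; ring
  have hle : ∀ ψ : Module.Dual (ZMod 2) W, ∑ x, f x * (ψ x).val ≤ 10 := by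
    intro ψ
    rw [← hsum]
    refine Finset.sum_le_sum fun y _ => ?_
    have := ZMod.val_lt (ψ y)
    nlinarith
  have hz : ∀ ψ : Module.Dual (ZMod 2) W, ∑ x, f x * (ψ x).val = 0 → ψ = 0 := by
    intro ψ h
    rw [Finset.sum_eq_zero_iff] at h
    have : Set.EqOn ψ (0 : Module.Dual (ZMod 2) W) {x | f x ≠ 0} := by
      intro x hx
      have h1 := h x (Finset.mem_univ _)
      rcases Nat.mul_eq_zero.1 h1 with h2 | h2
      · exact absurd h2 hx
      · simpa using (ZMod.val_eq_zero _).1 h2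
    exact LinearMap.ext_on hspan this
  have hs2 : ∀ ψ : Module.Dual (ZMod 2) W,
      (∑ y, (f y : ℤ) * sgnChar (ψ y)) ^ 2 + 4 * (∑ y, (f y : ℤ) * sgnChar (ψ y)) - 12 =
        if ψ = 0 then 128 else 0 := by
    intro ψ
    split_ifs with h
    · subst h
      rw [hs]; simp
    · have h0 : ∑ x, f x * (ψ x).val ≠ 0 := fun h' => h (hz ψ h')
      have h1 := hle ψ
      have h4 := hdiv ψ
      rw [hs]
      generalize ∑ x, f x * (ψ x).val = w at h0 h1 h4 ⊢
      have : w = 4 ∨ w = 8 := by omega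
      rcases this with rfl | rfl <;> norm_num
  have key : ∀ x, (2 : ℤ) ^ k * (∑ y, (f y : ℤ) * f (x + y) + 4 * f x -
      if x = 0 then 12 else 0) = 128 := by
    intro x
    have e1 : ∑ ψ : Module.Dual (ZMod 2) W, sgnChar (ψ x) *
        ((∑ y, (f y : ℤ) * sgnChar (ψ y)) ^ 2 + 4 * (∑ y, (f y : ℤ) * sgnChar (ψ y)) - 12)
        = 128 := by
      simp_rw [hs2]
      simp [sgnChar]
    have e2 : ∑ ψ : Module.Dual (ZMod 2) W, sgnChar (ψ x) *
        ((∑ y, (f y : ℤ) * sgnChar (ψ y)) ^ 2 + 4 * (∑ y, (f y : ℤ) * sgnChar (ψ y)) - 12)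
        = ∑ ψ : Module.Dual (ZMod 2) W, sgnChar (ψ x) * (∑ y, (f y : ℤ) * sgnChar (ψ y)) ^ 2
        + 4 * ∑ ψ : Module.Dual (ZMod 2) W, sgnChar (ψ x) * (∑ y, (f y : ℤ) * sgnChar (ψ y))
        - 12 * ∑ ψ : Module.Dual (ZMod 2) W, sgnChar (ψ x) := by
      rw [Finset.mul_sum, Finset.mul_sum, ← Finset.sum_add_distrib, ← Finset.sum_sub_distrib]
      refine Finset.sum_congr rfl fun y _ => ?_
      ring
    rw [e2, inv1, inv2, sgn_sum] at e1
    rw [← e1]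
    split_ifs <;> ring
  have k0 : (2 : ℤ) ^ k * (∑ y, (f y : ℤ) * f y - 12) = 128 := by
    have := key 0
    simpa [hf0] using this
  have kx : ∀ x, (2 : ℤ) ^ k * (4 * f x) ≤ 128 := by
    intro x
    by_cases hx : x = 0
    · subst hx; simp [hf0]
    · have h := key x
      rw [if_neg hx, sub_zero] at h
      rw [← h]
      have : (0 : ℤ) ≤ ∑ y, (f y : ℤ) * f (x + y) := by positivity
      have h2 : (0 : ℤ) < 2 ^ k := by positivity
      nlinarith
  have kd : ∀ x, x ≠ 0 → (16 : ℤ) ∣ 2 ^ k * (10 - f x) := by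
    intro x hx
    have e1 : ∑ ψ : Module.Dual (ZMod 2) W, (1 + sgnChar (ψ x)) *
        (10 - ∑ y, (f y : ℤ) * sgnChar (ψ y)) = 2 ^ k * (10 - f x) := by
      have a1 := sgn_sum (0 : W)
      have a2 := sgn_sum x
      have a3 := inv1 f x
      have a4 := inv1 f 0
      rw [if_pos rfl] at a1
      rw [if_neg hx] at a2
      simp only [map_zero, show sgnChar 0 = 1 from rfl, one_mul, hf0] at a1 a4
      have : ∑ ψ : Module.Dual (ZMod 2) W, (1 + sgnChar (ψ x)) *
        (10 - ∑ y, (f y : ℤ) * sgnChar (ψ y)) =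
        10 * ∑ ψ : Module.Dual (ZMod 2) W, (1 : ℤ) + 
        10 * ∑ ψ : Module.Dual (ZMod 2) W, sgnChar (ψ x) -
        ∑ ψ : Module.Dual (ZMod 2) W, ∑ y, (f y : ℤ) * sgnChar (ψ y) -
        ∑ ψ : Module.Dual (ZMod 2) W, sgnChar (ψ x) * ∑ y, (f y : ℤ) * sgnChar (ψ y) := by
        rw [Finset.mul_sum, Finset.mul_sum, ← Finset.sum_add_distrib, ← Finset.sum_sub_distrib,
          ← Finset.sum_sub_distrib]
        refine Finset.sum_congr rfl fun y _ => ?_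
        ring
      rw [this, a1, a2, a3, a4]
      push_cast
      ring
    rw [← e1]
    refine Finset.dvd_sum fun ψ _ => ?_
    obtain ⟨w, hw⟩ := hdiv ψ
    rw [hs, hw]
    have : sgnChar (ψ x) = 1 ∨ sgnChar (ψ x) = -1 := by
      generalize ψ x = a
      revert a; decide
    rcases this with h | h <;> rw [h]
    · exact ⟨w, by push_cast; ring⟩
    · simp
  have hfle : ∀ x, f x ≤ 10 := by
    intro x
    rw [← hsum]
    exact Finset.single_le_sum (f := f) (fun _ _ => Nat.zero_le _) (Finset.mem_univ x)
  have hsumZ : ∑ x, (f x : ℤ) = 10 := by exact_mod_cast hsum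
  have hsqle : ∀ x, (f x : ℤ) * f x ≤ ∑ y, (f y : ℤ) * f y := fun x =>
    Finset.single_le_sum (f := fun y => (f y : ℤ) * f y) (fun _ _ => by positivity)
      (Finset.mem_univ x)
  have hbound : ∀ c : ℤ, (∀ x, (f x : ℤ) ≤ c) → ∑ y, (f y : ℤ) * f y ≤ c * 10 := by
    intro c hc
    rw [← hsumZ, Finset.mul_sum]
    refine Finset.sum_le_sum fun y _ => ?_
    exact mul_le_mul_of_nonneg_right (hc y) (by positivity)
  have hex : ∃ x, 1 ≤ f x := by
    by_contra! h
    have : ∑ x, f x = 0 := Finset.sum_eq_zero fun x _ => by have := h x; omega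
    omega
  have hk5 : k ≤ 5 := by
    by_contra! h
    obtain ⟨x, hx⟩ := hex
    have h1 := kx x
    have h2 : (2 : ℤ) ^ 6 ≤ 2 ^ k := pow_le_pow_right₀ (by norm_num) h
    have h3 : (1 : ℤ) ≤ f x := by exact_mod_cast hx
    nlinarith
  have hev : ∀ x, x = 0 ∨ x ≠ 0 := fun x => em _
  clear_value k
  interval_cases k
  · have := hbound 10 (fun x => by exact_mod_cast hfle x)
    norm_num at k0
    omega
  · have hv : ∀ x, f x = 0 ∨ f x = 2 := by
      intro x
      by_cases hx : x = 0
      · left; rw [hx, hf0]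
      · have h1 := kd x hx
        have h2 := hfle x
        have h3 := hsqle x
        have : f x = 2 ∨ f x = 10 := by omega
        rcases this with h | h
        · exact Or.inr h
        · rw [h] at h3
          norm_num at k0 h3
          omega
    have := hbound 2 (fun x => by have := hv x; omega)
    norm_num at k0
    omega
  · have hv : ∀ x, f x = 0 ∨ f x = 2 ∨ f x = 6 := by
      intro x
      by_cases hx : x = 0
      · left; rw [hx, hf0]
      · have h1 := kd x hx
        have h2 := hfle x
        have h3 := kx x
        omega
    refine ⟨Or.inl ?_, fun x => by have := hv x; omega⟩
    by_contra! hc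
    have := hbound 2 (fun x => by have := hv x; have := hc x; omega)
    norm_num at k0
    omega
  · have hv : ∀ x, f x = 0 ∨ f x = 2 ∨ f x = 4 := by
      intro x
      by_cases hx : x = 0
      · left; rw [hx, hf0]
      · have h1 := kd x hx
        have h2 := hfle x
        have h3 := kx x
        omega
    refine ⟨Or.inl ?_, fun x => by have := hv x; omega⟩
    by_contra! hc
    have := hbound 2 (fun x => by have := hv x; have := hc x; omega)
    norm_num at k0
    omega
  · have hv : ∀ x, f x = 0 ∨ f x = 2 := by
      have h2 : ∀ x, (f x : ℤ) ≤ 2 := fun x => by have := kx x; omega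
      have h3 : ∑ x, (f x : ℤ) * (2 - f x) = 0 := by
        have : ∑ x, (f x : ℤ) * (2 - f x) = 2 * ∑ x, (f x : ℤ) - ∑ x, (f x : ℤ) * f x := by
          rw [Finset.mul_sum, ← Finset.sum_sub_distrib]
          exact Finset.sum_congr rfl fun y _ => by ring
        rw [this, hsumZ]
        norm_num at k0
        omega
      rw [Finset.sum_eq_zero_iff_of_nonneg] at h3
      · intro x
        have := h3 x (Finset.mem_univ _)
        rcases mul_eq_zero.1 this with h | h <;> omega
      · intro x _
        have := h2 x
        exact mul_nonneg (by positivity) (by linarith)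
    exact ⟨Or.inr ⟨rfl, hv⟩, fun x => by have := hv x; omega⟩
  · have := hbound 1 (fun x => by have := kx x; omega)
    norm_num at k0
    omega

end core

section transfer
variable {V : Type*} [AddCommGroup V] [Module (ZMod 2) V]

/-- The point multiset as a function on vectors. -/
noncomputable def vecMult (M : Projectivization (ZMod 2) V → ℕ) (x : V) : ℕ :=
  if h : x ≠ 0 then M (Projectivization.mk (ZMod 2) x h) else 0

lemma vecMult_rep (M : Projectivization (ZMod 2) V → ℕ) (P : Projectivization (ZMod 2) V) :
    vecMult M P.rep = M P := by
  rw [vecMult, dif_pos P.rep_nonzero, P.mk_rep]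

lemma rep_mk2 (x : V) (h : x ≠ 0) : (Projectivization.mk (ZMod 2) x h).rep = x := by
  obtain ⟨a, ha⟩ := Projectivization.exists_smul_eq_mk_rep (ZMod 2) x h
  rw [← ha, Subsingleton.elim a 1, one_smul]

lemma submodule_le_iff (P : Projectivization (ZMod 2) V) (K : Submodule (ZMod 2) V) :
    P.submodule ≤ K ↔ P.rep ∈ K := by
  rw [Projectivization.submodule_eq, Submodule.span_singleton_le_iff_mem]

lemma MVal_eq [Fintype V] (M : Projectivization (ZMod 2) V → ℕ) (K : Submodule (ZMod 2) V) :
    MVal M K = ∑ x : V, if x ∈ K then vecMult M x else 0 := by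
  have : Finite (Projectivization (ZMod 2) V) :=
    Finite.of_injective Projectivization.rep (fun P Q h => by
      rw [← P.mk_rep, ← Q.mk_rep]; congr 1)
  have : Fintype (Projectivization (ZMod 2) V) := Fintype.ofFinite _
  rw [MVal, finsum_mem_eq_finite_toFinset_sum _ (Set.toFinite _), ← Finset.sum_filter]
  refine Finset.sum_of_injOn Projectivization.rep ?_ ?_ ?_ ?_
  · intro P _ Q _ h
    rw [← P.mk_rep, ← Q.mk_rep]; congr 1
  · intro P hP
    simpa [submodule_le_iff] using hP
  · intro x hx hx2
    by_contra hne
    have h0 : x ≠ 0 := fun h => hne (by simp [vecMult, h])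
    refine hx2 ⟨Projectivization.mk (ZMod 2) x h0, ?_, rep_mk2 x h0⟩
    simpa [submodule_le_iff, rep_mk2] using hx
  · intro P _
    exact (vecMult_rep M P).symm

end transfer

theorem stmt_7 (v : ℕ) (M : Projectivization (ZMod 2) (Fin v → ZMod 2) → ℕ)
    (hdiv : IsDivisible 4 M) (hcard : MVal M ⊤ = 10) :
    ((∃ P, 4 ≤ M P) ∨
      (∃ B : Finset (Projectivization (ZMod 2) (Fin v → ZMod 2)), IsProjBase 5 B ∧
        ∀ Q, M Q = if Q ∈ B then 2 else 0)) ∧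
    (∀ P, M P = 0 ∨ M P = 2 ∨ M P = 4 ∨ M P = 6) := by
  set g := vecMult M with hg
  have g0 : g 0 = 0 := by simp [hg, vecMult]
  have hsum : ∑ x, g x = 10 := by
    rw [← hcard, MVal_eq]; simp [hg]
  have hd : ∀ ψ : Module.Dual (ZMod 2) (Fin v → ZMod 2), 4 ∣ ∑ x, g x * (ψ x).val := by
    intro ψ
    by_cases hψ : ψ = 0
    · simp [hψ]
    · have hr := Module.Dual.finrank_ker_add_one_of_ne_zero hψ
      have h1 := hdiv (LinearMap.ker ψ) hr
      rw [hcard, MVal_eq] at h1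
      have h2 : (∑ x, if x ∈ LinearMap.ker ψ then vecMult M x else 0) +
          ∑ x, g x * (ψ x).val = 10 := by
        rw [← hsum, ← Finset.sum_add_distrib]
        refine Finset.sum_congr rfl fun x _ => ?_
        rw [LinearMap.mem_ker]
        have : ψ x = 0 ∨ ψ x = 1 := by
          generalize ψ x = a
          revert a; decide
        rcases this with h | h
        · simp [h, hg]
        · simp [h, ZMod.val_one]
      unfold Nat.ModEq at h1
      omega
  set W : Submodule (ZMod 2) (Fin v → ZMod 2) := Submodule.span (ZMod 2) {x | g x ≠ 0} with hW
  have hmemW : ∀ x, g x ≠ 0 → x ∈ W := fun x hx => Submodule.subset_span hx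
  have hsumW : ∀ h : (Fin v → ZMod 2) → ℕ,
      ∑ x : W, g x * h x = ∑ x, g x * h x := by
    intro h
    refine Finset.sum_of_injOn Subtype.val (Subtype.val_injective.injOn) (by simp) ?_ (by simp)
    intro x _ hx
    by_contra hne
    have h1 : g x ≠ 0 := fun h' => hne (by simp [h'])
    exact hx ⟨⟨x, hmemW x h1⟩, by simp, rfl⟩
  have : Finite (Module.Dual (ZMod 2) W) := Module.finite_of_finite (ZMod 2)
  have : Fintype (Module.Dual (ZMod 2) W) := Fintype.ofFinite _
  have hcore := core_main (W := W) (fun x => g x) (by simpa using g0)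
    (by simpa [hsum] using hsumW (fun _ => 1))
    (by
      have := Submodule.span_span_coe_preimage (R := ZMod 2) (s := {x | g x ≠ 0})
      exact this)
    (by
      intro ψ
      obtain ⟨φ, hφ⟩ := LinearMap.exists_extend ψ
      have h1 : ∀ x : W, ψ x = φ x := fun x => by rw [← hφ]; rfl
      have := hsumW (fun x => (φ x).val)
      simp_rw [h1]
      rw [this]
      exact hd φ)
  have hMg : ∀ P, M P = g P.rep := fun P => (vecMult_rep M P).symm
  obtain ⟨hA, hB⟩ := hcore
  refine ⟨?_, ?_⟩
  · rcases hA with ⟨x, hx⟩ | ⟨hk, hv⟩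
    · left
      have hx0 : (x : Fin v → ZMod 2) ≠ 0 := by
        intro h
        rw [h, g0] at hx
        omega
      exact ⟨Projectivization.mk _ _ hx0, by rw [hMg, rep_mk2]; exact hx⟩
    · right
      have hv' : ∀ x, g x = 0 ∨ g x = 2 := by
        intro x
        by_cases h : g x = 0
        · exact Or.inl h
        · exact hv ⟨x, hmemW x h⟩
      have : Finite (Projectivization (ZMod 2) (Fin v → ZMod 2)) :=
        Finite.of_injective Projectivization.rep (fun P Q h => by
          rw [← P.mk_rep, ← Q.mk_rep]; congr 1)
      have : Fintype (Projectivization (ZMod 2) (Fin v → ZMod 2)) := Fintype.ofFinite _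
      set B : Finset (Projectivization (ZMod 2) (Fin v → ZMod 2)) :=
        Finset.univ.filter (fun P => g P.rep = 2) with hBdef
      have hBsum : ∀ {A : Type} [AddCommMonoid A] (h : (Fin v → ZMod 2) → A),
          ∑ P ∈ B, h P.rep = ∑ x ∈ Finset.univ.filter (fun x => g x = 2), h x := by
        intro A _ h
        refine Finset.sum_of_injOn Projectivization.rep ?_ ?_ ?_ ?_
        · intro P _ Q _ h
          rw [← P.mk_rep, ← Q.mk_rep]; congr 1
        · intro P hP
          simpa [hBdef] using hP
        · intro x hx hx2
          exfalso
          have h0 : x ≠ 0 := by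
            rintro rfl
            simp [g0] at hx
          refine hx2 ⟨Projectivization.mk (ZMod 2) x h0, ?_, rep_mk2 x h0⟩
          simpa [hBdef, rep_mk2] using hx
        · intro P _
          rfl
      have hgsum : ∀ h : (Fin v → ZMod 2) → ℕ,
          ∑ x, g x * h x = 2 * ∑ P ∈ B, h P.rep := by
        intro h
        rw [hBsum, Finset.sum_filter, Finset.mul_sum]
        refine Finset.sum_congr rfl fun x _ => ?_
        rcases hv' x with h | h <;> simp [h]
      have hBc : B.card = 5 := by
        have := hgsum (fun _ => 1)
        simp [hsum] at this
        omega
      have hB0 : ∑ P ∈ B, P.rep = 0 := by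
        rw [← Module.forall_dual_apply_eq_zero_iff (ZMod 2)]
        intro φ
        have h1 := hd φ
        rw [hgsum (fun x => (φ x).val)] at h1
        have h2 : 2 ∣ ∑ P ∈ B, (φ P.rep).val := by omega
        rw [← ZMod.natCast_eq_zero_iff] at h2
        rw [map_sum, ← h2]
        push_cast
        simp
      refine ⟨B, ⟨hBc, ?_⟩, ?_⟩
      · intro T hT hTc
        have hW2 : (⨆ P ∈ T, Projectivization.submodule P) = W := by
          apply le_antisymm
          · refine iSup₂_le fun P hP => ?_
            rw [submodule_le_iff]
            apply hmemW
            have := hT hP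
            simp only [hBdef, Finset.mem_filter] at this
            omega
          · rw [hW, Submodule.span_le]
            have hTm : ∀ P ∈ T, P.rep ∈ (⨆ P ∈ T, Projectivization.submodule P) := by
              intro P hP
              rw [← submodule_le_iff]
              exact le_iSup₂_of_le P hP le_rfl
            have hBm : ∀ P ∈ B, P.rep ∈ (⨆ P ∈ T, Projectivization.submodule P) := by
              intro P hP
              by_cases hPT : P ∈ T
              · exact hTm P hPT
              · have hins : insert P T = B := by
                  apply Finset.eq_of_subset_of_card_le
                  · exact Finset.insert_subset hP hT
                  · rw [Finset.card_insert_of_notMem hPT]; omega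
                rw [← hins, Finset.sum_insert hPT] at hB0
                rw [eq_neg_of_add_eq_zero_left hB0]
                exact Submodule.neg_mem _ (Submodule.sum_mem _ hTm)
            intro x hx
            have hx' : g x ≠ 0 := hx
            have h0 : x ≠ 0 := by
              rintro rfl
              exact hx' g0
            have := hBm (Projectivization.mk _ x h0) (by
              have := hv' x
              simp only [hBdef, Finset.mem_filter, Finset.mem_univ, true_and, rep_mk2]
              omega)
            rwa [rep_mk2] at this
        rw [hW2, hk]
      · intro Q
        rw [hMg]
        have := hv' Q.rep
        simp only [hBdef, Finset.mem_filter, Finset.mem_univ, true_and]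
        split_ifs <;> omega
  · intro P
    rw [hMg]
    by_cases h : g P.rep = 0
    · exact Or.inl h
    · exact hB ⟨P.rep, hmemW _ h⟩
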